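/- Suppose q ≠ 2, or q = 2 and T ∤ M and (T+1) ∤ M. Let e_M(Γ) = gcd(e(Γ'/Γ), M) and let Γ_φ = {a ∈ Γ : ⟨σ, a⟩ = 0 for all σ ∈ H_Γ(M)} be the kernel of the induced map φ : Γ → Hom_A(H_Γ(M), Λ_M). Then Γ_φ^{e_M(Γ)} ⊆ Γ^M, i.e. the image of Γ_φ under the Carlitz action of e_M(Γ) is contained in the image of Γ under the Carlitz action of M. -/

import Mathlib

open Polynomial IntermediateField

set_option synthInstance.maxHeartbeats 1000000
set_option maxHeartbeats 1000000

/-- `ψ` is the Carlitz module: the ring homomorphism `A = 𝔽_q[T] → End_{𝔽_q}(k̄, +)`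
determined by `T ↦ (α ↦ Tα + α^q)` and `c ↦ (α ↦ cα)` for constants `c ∈ 𝔽_q`. -/
def IsCarlitz {Fq : Type} [Field Fq] [Fintype Fq]
    (ψ : Polynomial Fq →+* AddMonoid.End (AlgebraicClosure (RatFunc Fq))) : Prop :=
  (∀ α, ψ X α = algebraMap (RatFunc Fq) (AlgebraicClosure (RatFunc Fq)) RatFunc.X * α
      + α ^ Fintype.card Fq) ∧
  (∀ (c : Fq) (α), ψ (C c) α
      = algebraMap (RatFunc Fq) (AlgebraicClosure (RatFunc Fq)) (RatFunc.C c) * α)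

/-- An automorphism `τ ∈ Gal(E/k)` fixes the `M`-torsion points `Λ_M` pointwise; when
`E ⊇ K = k(Λ_M)` this says exactly `τ ∈ Gal(E/K)`. -/
def FixesTorsion {Fq : Type} [Field Fq] [Fintype Fq]
    (ψ : Polynomial Fq →+* AddMonoid.End (AlgebraicClosure (RatFunc Fq)))
    (M : Polynomial Fq)
    {E : IntermediateField (RatFunc Fq) (AlgebraicClosure (RatFunc Fq))}
    (τ : ↥E ≃ₐ[RatFunc Fq] ↥E) : Prop :=
  ∀ x : ↥E, ψ M (x : AlgebraicClosure (RatFunc Fq)) = 0 → τ x = x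

/-- An automorphism `s ∈ Gal(E/k)` is an extension of `σ_B ∈ Gal(K/k)`, i.e. it acts on
the `M`-torsion points `Λ_M ⊆ E` by `λ ↦ λ^B`. -/
def ExtendsSigma {Fq : Type} [Field Fq] [Fintype Fq]
    (ψ : Polynomial Fq →+* AddMonoid.End (AlgebraicClosure (RatFunc Fq)))
    (M : Polynomial Fq)
    {E : IntermediateField (RatFunc Fq) (AlgebraicClosure (RatFunc Fq))}
    (s : ↥E ≃ₐ[RatFunc Fq] ↥E) (B : Polynomial Fq) : Prop :=
  ∀ x : ↥E, ψ M (x : AlgebraicClosure (RatFunc Fq)) = 0 →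
    ((s x : AlgebraicClosure (RatFunc Fq))) = ψ B (x : AlgebraicClosure (RatFunc Fq))

/-- `c` is the natural `A`-action on `Gal(E/K)`, defined via decompositions: for
`f ≡ f_1 + ⋯ + f_n (mod M)` with all `gcd(f_i, M) = 1` and extensions `s_i` of
`σ_{f_i}`, one has `c f τ = Σ_i s_i ∘ τ ∘ s_i⁻¹`. -/
def IsDecompConjAction {Fq : Type} [Field Fq] [Fintype Fq]
    (ψ : Polynomial Fq →+* AddMonoid.End (AlgebraicClosure (RatFunc Fq)))
    (M : Polynomial Fq)
    {E : IntermediateField (RatFunc Fq) (AlgebraicClosure (RatFunc Fq))}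
    (c : Polynomial Fq → (↥E ≃ₐ[RatFunc Fq] ↥E) → (↥E ≃ₐ[RatFunc Fq] ↥E)) : Prop :=
  ∀ (f : Polynomial Fq) (τ : ↥E ≃ₐ[RatFunc Fq] ↥E), FixesTorsion ψ M τ →
    ∀ (n : ℕ) (g : Fin n → Polynomial Fq), (∀ i, IsCoprime (g i) M) →
      M ∣ (f - ∑ i, g i) →
      ∀ s : Fin n → (↥E ≃ₐ[RatFunc Fq] ↥E), (∀ i, ExtendsSigma ψ M (s i) (g i)) →
        c f τ = (List.ofFn (fun i => s i * τ * (s i)⁻¹)).prod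

theorem ck_add {Fq : Type} [Field Fq] [Fintype Fq]
    (ψ : Polynomial Fq →+* AddMonoid.End (AlgebraicClosure (RatFunc Fq)))
    (f g : Polynomial Fq) (α) : ψ (f + g) α = ψ f α + ψ g α := by
  rw [map_add]; rfl

theorem ck_sub {Fq : Type} [Field Fq] [Fintype Fq]
    (ψ : Polynomial Fq →+* AddMonoid.End (AlgebraicClosure (RatFunc Fq)))
    (f g : Polynomial Fq) (α) : ψ (f - g) α = ψ f α - ψ g α := by
  rw [map_sub]; rfl

theorem ck_one {Fq : Type} [Field Fq] [Fintype Fq]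
    (ψ : Polynomial Fq →+* AddMonoid.End (AlgebraicClosure (RatFunc Fq)))
    (α) : ψ 1 α = α := by
  rw [map_one]; rfl

theorem ck_mul {Fq : Type} [Field Fq] [Fintype Fq]
    (ψ : Polynomial Fq →+* AddMonoid.End (AlgebraicClosure (RatFunc Fq)))
    (f g : Polynomial Fq) (α) : ψ (f * g) α = ψ f (ψ g α) := by
  rw [map_mul]; rfl

theorem ck_coeffs {Fq : Type} [Field Fq] [Fintype Fq]
    (ψ : Polynomial Fq →+* AddMonoid.End (AlgebraicClosure (RatFunc Fq)))
    (hψ : IsCarlitz ψ) (n : ℕ) : ∀ f : Polynomial Fq, f.natDegree ≤ n →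
    ∃ c : ℕ → Polynomial Fq, c 0 = f ∧ c n = C (f.coeff n) ∧ (∀ i, n < i → c i = 0) ∧
      (∀ i, c (i+1) * X ^ (Fintype.card Fq ^ (i+1)) + c i
        = X * c (i+1) + c i ^ Fintype.card Fq) ∧
      ∀ α, ψ f α = ∑ i ∈ Finset.range (n+1),
        algebraMap (Polynomial Fq) (AlgebraicClosure (RatFunc Fq)) (c i)
          * α ^ (Fintype.card Fq ^ i) := by
  have hq0 : Fintype.card Fq ≠ 0 := Fintype.card_ne_zero
  have hX : algebraMap (Polynomial Fq) (AlgebraicClosure (RatFunc Fq)) X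
      = algebraMap (RatFunc Fq) (AlgebraicClosure (RatFunc Fq)) RatFunc.X := by
    rw [IsScalarTower.algebraMap_apply (Polynomial Fq) (RatFunc Fq), RatFunc.algebraMap_X]
  have hC : ∀ a, algebraMap (Polynomial Fq) (AlgebraicClosure (RatFunc Fq)) (C a)
      = algebraMap (RatFunc Fq) (AlgebraicClosure (RatFunc Fq)) (RatFunc.C a) := by
    intro a
    rw [IsScalarTower.algebraMap_apply (Polynomial Fq) (RatFunc Fq), RatFunc.algebraMap_C]
  obtain ⟨p, hp⟩ := CharP.exists Fq
  obtain ⟨r, hpp, hr⟩ := FiniteField.card Fq p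
  have : Fact p.Prime := ⟨hpp⟩
  have : ExpChar Fq p := .prime hpp
  have : CharP (AlgebraicClosure (RatFunc Fq)) p := by
    have h1 : CharP (RatFunc Fq) p := charP_of_injective_algebraMap
      (R := Polynomial Fq) (RatFunc.algebraMap_injective Fq) p
    exact charP_of_injective_algebraMap
      (R := RatFunc Fq) (algebraMap (RatFunc Fq) (AlgebraicClosure (RatFunc Fq))).injective p
  have addq : ∀ x y : Polynomial Fq, (x + y) ^ Fintype.card Fq
      = x ^ Fintype.card Fq + y ^ Fintype.card Fq := by
    intro x y; rw [hr, add_pow_char_pow]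
  have sumq : ∀ (s : Finset ℕ) (g : ℕ → AlgebraicClosure (RatFunc Fq)),
      (∑ i ∈ s, g i) ^ Fintype.card Fq = ∑ i ∈ s, g i ^ Fintype.card Fq := by
    intro s g; rw [hr, sum_pow_char_pow]
  have Cq : ∀ a : Fq, (C a : Polynomial Fq) ^ Fintype.card Fq = C a := by
    intro a; rw [← C_pow, FiniteField.pow_card]
  induction n with
  | zero =>
    intro f hf
    obtain ⟨a, rfl⟩ := natDegree_eq_zero.1 (Nat.le_zero.1 hf)
    refine ⟨fun i => if i = 0 then C a else 0, by simp, by simp, ?_, ?_, ?_⟩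
    · intro i hi; simp [hi.ne']
    · intro i; rcases i with _ | i <;> simp [Cq, hq0]
    · intro α; rw [hψ.2]; simp [hC]
  | succ n ih =>
    intro f hf
    obtain ⟨c, h0, hn, hgt, hrec, hev⟩ := ih f.divX (by rw [natDegree_divX_eq_natDegree_tsub_one]; omega)
    have hf' : X * f.divX + C (f.coeff 0) = f := X_mul_divX_add f
    obtain ⟨c', hc0, hcs⟩ : ∃ c' : ℕ → Polynomial Fq, c' 0 = X * c 0 + C (f.coeff 0) ∧
        ∀ j, c' (j+1) = X * c (j+1) + c j ^ Fintype.card Fq :=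
      ⟨fun i => Nat.casesOn i (X * c 0 + C (f.coeff 0))
        (fun j => X * c (j+1) + c j ^ Fintype.card Fq), rfl, fun _ => rfl⟩
    refine ⟨c', ?_, ?_, ?_, ?_, ?_⟩
    · simp only [hc0, h0, hf']
    · simp only [hcs, hgt (n+1) (by omega), hn, Cq, coeff_divX]; simp
    · intro i hi
      rcases i with _ | i
      · omega
      · simp [hcs, hgt (i+1) (by omega), hgt i (by omega), hq0]
    · intro i
      rcases i with _ | i
      · have := hrec 0
        simp only [hcs, hc0, addq, mul_pow, Cq]
        have e1 : (X : Polynomial Fq) ^ (Fintype.card Fq ^ (0+1)) = X ^ Fintype.card Fq := by simp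
        rw [e1] at this ⊢
        linear_combination X * this
      · have h1 := hrec (i+1)
        have h2 := congrArg (· ^ Fintype.card Fq) (hrec i)
        simp only [hcs, addq, mul_pow, ← pow_mul, ← pow_succ] at h1 h2 ⊢
        linear_combination X * h1 + h2
    · intro α
      conv_lhs => rw [← hf']
      rw [ck_add, ck_mul, hψ.1, hψ.2, hev, sumq,
        Finset.sum_range_succ' _ (n+1)]
      simp only [hcs, hc0, map_add, map_mul, map_pow, hX, hC, add_mul, Finset.sum_add_distrib, mul_pow,
        ← pow_mul, ← pow_succ]
      have e := Finset.sum_range_succ (fun i => algebraMap (Polynomial Fq) (AlgebraicClosure (RatFunc Fq)) (c i)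
          * α ^ (Fintype.card Fq ^ i)) (n+1)
      rw [hgt (n+1) (by omega), Finset.sum_range_succ'] at e
      rw [Finset.mul_sum]
      simp only [map_zero, zero_mul, add_zero] at e
      rw [← Finset.mul_sum, ← e]
      simp only [mul_assoc, ← Finset.mul_sum]
      ring

/-- automorphisms commute with the Carlitz action -/
theorem ck_map {Fq : Type} [Field Fq] [Fintype Fq]
    (ψ : Polynomial Fq →+* AddMonoid.End (AlgebraicClosure (RatFunc Fq)))
    (hψ : IsCarlitz ψ) (f : Polynomial Fq)
    (E : IntermediateField (RatFunc Fq) (AlgebraicClosure (RatFunc Fq)))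
    (x : E) : ∃ y : E, (y : AlgebraicClosure (RatFunc Fq)) = ψ f x ∧
      ∀ τ : E →ₐ[RatFunc Fq] AlgebraicClosure (RatFunc Fq), τ y = ψ f (τ x) := by
  obtain ⟨c, -, -, -, -, hev⟩ := ck_coeffs ψ hψ f.natDegree f le_rfl
  refine ⟨∑ i ∈ Finset.range (f.natDegree+1),
        algebraMap (RatFunc Fq) E (algebraMap (Polynomial Fq) (RatFunc Fq) (c i))
          * x ^ (Fintype.card Fq ^ i), ?_, ?_⟩
  · rw [hev]
    push_cast
    refine Finset.sum_congr rfl fun i _ => ?_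
    rw [IsScalarTower.algebraMap_apply (Polynomial Fq) (RatFunc Fq) (AlgebraicClosure (RatFunc Fq))]
  · intro τ
    rw [hev, map_sum]
    refine Finset.sum_congr rfl fun i _ => ?_
    rw [map_mul, map_pow, AlgHom.commutes,
      IsScalarTower.algebraMap_apply (Polynomial Fq) (RatFunc Fq) (AlgebraicClosure (RatFunc Fq))]

theorem ck_map' {Fq : Type} [Field Fq] [Fintype Fq]
    (ψ : Polynomial Fq →+* AddMonoid.End (AlgebraicClosure (RatFunc Fq)))
    (hψ : IsCarlitz ψ) (f : Polynomial Fq)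
    (x : AlgebraicClosure (RatFunc Fq))
    (τ : AlgebraicClosure (RatFunc Fq) →ₐ[RatFunc Fq] AlgebraicClosure (RatFunc Fq)) :
      τ (ψ f x) = ψ f (τ x) := by
  obtain ⟨y, hy, h⟩ := ck_map ψ hψ f ⊤ ⟨x, trivial⟩
  have := h (τ.comp (⊤ : IntermediateField _ _).val)
  simp only [AlgHom.comp_apply, IntermediateField.coe_val] at this
  rwa [hy] at this

/-- a polynomial for `ψ M x = a` -/
theorem ck_poly {Fq : Type} [Field Fq] [Fintype Fq]
    (ψ : Polynomial Fq →+* AddMonoid.End (AlgebraicClosure (RatFunc Fq)))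
    (hψ : IsCarlitz ψ) (M : Polynomial Fq) (hM : 0 < M.natDegree) (a : RatFunc Fq) :
    ∃ p : Polynomial (RatFunc Fq), p.Separable ∧
      ∀ x, aeval x p = ψ M x - algebraMap (RatFunc Fq) (AlgebraicClosure (RatFunc Fq)) a := by
  obtain ⟨c, h0, -, -, -, hev⟩ := ck_coeffs ψ hψ M.natDegree M le_rfl
  have hM0 : M ≠ 0 := by rintro rfl; simp at hM
  have hcard : ((Fintype.card Fq : ℕ) : Polynomial (RatFunc Fq)) = 0 := by
    have h1 : ((Fintype.card Fq : ℕ) : Fq) = 0 := FiniteField.cast_card_eq_zero Fq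
    have := congrArg (fun z : Fq => (C (RatFunc.C z) : Polynomial (RatFunc Fq))) h1
    simpa only [map_natCast, map_zero] using this
  refine ⟨∑ i ∈ Finset.range (M.natDegree+1),
        C (algebraMap (Polynomial Fq) (RatFunc Fq) (c i)) * X ^ (Fintype.card Fq ^ i) - C a, ?_, ?_⟩
  · rw [separable_def]
    have : derivative (∑ i ∈ Finset.range (M.natDegree+1),
        C (algebraMap (Polynomial Fq) (RatFunc Fq) (c i)) * X ^ (Fintype.card Fq ^ i) - C a)
        = C (algebraMap (Polynomial Fq) (RatFunc Fq) M) := by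
      rw [Finset.sum_range_succ']
      simp [h0, derivative_X_pow, pow_succ, hcard]
    rw [this]
    have hu : IsUnit (C (algebraMap (Polynomial Fq) (RatFunc Fq) M)) :=
      isUnit_C.2 (isUnit_iff_ne_zero.2 (by simpa using hM0))
    obtain ⟨v, hv⟩ := hu.exists_left_inv
    exact ⟨0, v, by rw [hv]; ring⟩
  · intro x
    rw [hev]
    simp only [map_sub, map_sum, map_mul, aeval_C, map_pow, aeval_X]
    congr 1

theorem ck_integral {Fq : Type} [Field Fq] [Fintype Fq]
    (ψ : Polynomial Fq →+* AddMonoid.End (AlgebraicClosure (RatFunc Fq)))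
    (hψ : IsCarlitz ψ) (M : Polynomial Fq) (hM : 0 < M.natDegree)
    (x : AlgebraicClosure (RatFunc Fq)) (hx : ψ M x = 0) : IsIntegral (Polynomial Fq) x := by
  obtain ⟨c, c0, cn, -, -, cev⟩ := ck_coeffs ψ hψ M.natDegree M le_rfl
  have hM0 : M ≠ 0 := by rintro rfl; simp at hM
  have hlc : M.leadingCoeff ≠ 0 := leadingCoeff_ne_zero.2 hM0
  have hd : (∑ i ∈ Finset.range M.natDegree,
      C (C M.leadingCoeff⁻¹ * c i) * (X : Polynomial (Polynomial Fq)) ^ (Fintype.card Fq ^ i)).degree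
      < ((Fintype.card Fq ^ M.natDegree : ℕ) : WithBot ℕ) := by
    rw [← mem_degreeLT]
    refine sum_mem fun i hi => ?_
    rw [mem_degreeLT]
    refine (degree_C_mul_X_pow_le _ _).trans_lt ?_
    exact_mod_cast Nat.pow_lt_pow_right Fintype.one_lt_card (Finset.mem_range.1 hi)
  refine ⟨_, monic_X_pow_add hd, ?_⟩
  rw [cev, Finset.sum_range_succ, cn] at hx
  have h1 : algebraMap (Polynomial Fq) (AlgebraicClosure (RatFunc Fq)) (C M.leadingCoeff⁻¹) *
     algebraMap (Polynomial Fq) (AlgebraicClosure (RatFunc Fq)) (C M.leadingCoeff) = 1 := by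
    rw [← map_mul, ← C_mul, inv_mul_cancel₀ hlc, C_1, map_one]
  simp only [eval₂_add, eval₂_X_pow, eval₂_finsetSum, eval₂_mul, eval₂_C, map_mul, mul_assoc,
    ← Finset.mul_sum]
  have h2 := congrArg (algebraMap (Polynomial Fq) (AlgebraicClosure (RatFunc Fq)) (C M.leadingCoeff⁻¹) * ·) hx
  simp only [mul_zero, mul_add, ← mul_assoc] at h2
  rw [coeff_natDegree, h1, one_mul, add_comm] at h2
  exact h2

theorem ck_galois {Fq : Type} [Field Fq] [Fintype Fq]
    (ψ : Polynomial Fq →+* AddMonoid.End (AlgebraicClosure (RatFunc Fq)))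
    (hψ : IsCarlitz ψ) (M : Polynomial Fq) (hM : 0 < M.natDegree)
    (Γ : AddSubgroup (AlgebraicClosure (RatFunc Fq)))
    (hΓk : ∀ x ∈ Γ, x ∈ Set.range (algebraMap (RatFunc Fq) (AlgebraicClosure (RatFunc Fq)))) :
    IsGalois (RatFunc Fq) (adjoin (RatFunc Fq) {x | ψ M x ∈ Γ}) := by
  have hsep : Algebra.IsSeparable (RatFunc Fq) (adjoin (RatFunc Fq) {x | ψ M x ∈ Γ}) := by
    rw [isSeparable_adjoin_iff_isSeparable]
    intro x hx
    obtain ⟨a, ha⟩ := hΓk _ hx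
    obtain ⟨p, hp, h⟩ := ck_poly ψ hψ M hM a
    exact hp.of_dvd (minpoly.dvd _ _ (by rw [h, ha, sub_self]))
  have hnor : Normal (RatFunc Fq) (adjoin (RatFunc Fq) {x | ψ M x ∈ Γ}) := by
    rw [normal_iff_forall_map_le]
    intro σ
    rw [adjoin_map, adjoin_le_iff]
    rintro _ ⟨x, hx, rfl⟩
    apply subset_adjoin
    show ψ M (σ x) ∈ Γ
    obtain ⟨a, ha⟩ := hΓk _ hx
    rw [← ck_map' ψ hψ, ← ha, AlgHom.commutes, ha]
    exact hx
  exact ⟨⟩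

theorem ck_prime_dvd {Fq : Type} [Field Fq] [Fintype Fq] (P : Polynomial Fq)
    (hP : Irreducible P) (c : ℕ → Polynomial Fq) (h0 : c 0 = P)
    (hrec : ∀ i, c (i+1) * X ^ (Fintype.card Fq ^ (i+1)) + c i
        = X * c (i+1) + c i ^ Fintype.card Fq) (i : ℕ) (hi : i < P.natDegree) : P ∣ c i := by
  induction i with
  | zero => rw [h0]
  | succ i ih =>
    have h1 := ih (by omega)
    have h2 : P ∣ c (i+1) * (X ^ (Fintype.card Fq ^ (i+1)) - X) := by
      have : c (i+1) * (X ^ (Fintype.card Fq ^ (i+1)) - X) = c i ^ Fintype.card Fq - c i := by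
        linear_combination hrec i
      rw [this]
      exact dvd_sub (dvd_pow h1 Fintype.card_ne_zero) h1
    refine (hP.prime.dvd_or_dvd h2).resolve_right fun h => ?_
    rw [← Nat.card_eq_fintype_card] at h
    have := Nat.le_of_dvd (by omega) (hP.natDegree_dvd_of_dvd_X_pow_card_pow_sub_X h)
    omega

theorem ck_card_quot {Fq : Type} [Field Fq] [Fintype Fq] (P : Polynomial Fq)
    (hP : P.Monic) : Finite (Polynomial Fq ⧸ Ideal.span {P}) ∧
      Nat.card (Polynomial Fq ⧸ Ideal.span {P}) = Fintype.card Fq ^ P.natDegree := by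
  have b := (AdjoinRoot.powerBasis' hP).basis
  have : Module.Finite Fq (AdjoinRoot P) := (AdjoinRoot.powerBasis' hP).finite
  have hf : Finite (AdjoinRoot P) := Module.finite_of_finite Fq
  refine ⟨hf, ?_⟩
  have h := Module.natCard_eq_pow_finrank (K := Fq) (V := AdjoinRoot P)
  rw [(AdjoinRoot.powerBasis' hP).finrank, AdjoinRoot.powerBasis'_dim, Nat.card_eq_fintype_card (α := Fq)] at h
  exact h

theorem ck_frob {Fq : Type} [Field Fq] [Fintype Fq]
    (ψ : Polynomial Fq →+* AddMonoid.End (AlgebraicClosure (RatFunc Fq)))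
    (hψ : IsCarlitz ψ) (M : Polynomial Fq) (hM : 0 < M.natDegree)
    (P : Polynomial Fq) (hP : Irreducible P) (hPm : P.Monic) (hPM : ¬ P ∣ M) :
    ∃ τ : AlgebraicClosure (RatFunc Fq) ≃ₐ[RatFunc Fq] AlgebraicClosure (RatFunc Fq),
      ∀ x, ψ M x = 0 → τ x = ψ P x := by
  classical
  set L := adjoin (RatFunc Fq) {x | ψ M x ∈ (⊥ : AddSubgroup (AlgebraicClosure (RatFunc Fq)))}
    with hL
  have hgal : IsGalois (RatFunc Fq) L := ck_galois ψ hψ M hM ⊥ (by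
    rintro x hx; exact ⟨0, by rw [map_zero]; exact (AddSubgroup.mem_bot.1 hx).symm⟩)
  obtain ⟨c, c0, cn, -, -, cev⟩ := ck_coeffs ψ hψ M.natDegree M le_rfl
  have hM0 : M ≠ 0 := by rintro rfl; simp at hM
  have hfin : FiniteDimensional (RatFunc Fq) L := by
    obtain ⟨p, hp, h⟩ := ck_poly ψ hψ M hM 0
    have hs : {x | ψ M x ∈ (⊥ : AddSubgroup (AlgebraicClosure (RatFunc Fq)))}.Finite := by
      refine (p.rootSet_finite (AlgebraicClosure (RatFunc Fq))).subset fun x hx => ?_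
      rw [mem_rootSet]
      refine ⟨hp.ne_zero, ?_⟩
      rw [h, AddSubgroup.mem_bot.1 hx]; simp
    have := hs.to_subtype
    exact finiteDimensional_adjoin fun x _ => Algebra.IsIntegral.isIntegral x
  let S := integralClosure (Polynomial Fq) L
  have hfr : IsFractionRing S L :=
    IsIntegralClosure.isFractionRing_of_finite_extension (Polynomial Fq) (RatFunc Fq) L S
  have hinv : Algebra.IsInvariant (Polynomial Fq) S (S ≃ₐ[Polynomial Fq] S) :=
    Algebra.isInvariant_of_isGalois' (Polynomial Fq) (RatFunc Fq) L S
  have hfinG : Finite (S ≃ₐ[Polynomial Fq] S) :=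
    Finite.of_equiv _ (galRestrict (Polynomial Fq) (RatFunc Fq) L S).toEquiv
  have hfinS : Module.Finite (Polynomial Fq) S :=
    IsIntegralClosure.finite (Polynomial Fq) (RatFunc Fq) L S
  have hPmax : (Ideal.span {P}).IsMaximal := PrincipalIdealRing.isMaximal_of_irreducible hP
  have htow : IsScalarTower (Polynomial Fq) L (AlgebraicClosure (RatFunc Fq)) := by
    refine IsScalarTower.of_algebraMap_eq fun x => ?_
    rw [IsScalarTower.algebraMap_apply (Polynomial Fq) (RatFunc Fq) L,
      ← IsScalarTower.algebraMap_apply (RatFunc Fq) L,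
      ← IsScalarTower.algebraMap_apply (Polynomial Fq) (RatFunc Fq)]
  have hinjL : Function.Injective (algebraMap (Polynomial Fq) L) := by
    rw [IsScalarTower.algebraMap_eq (Polynomial Fq) (RatFunc Fq) L]
    exact (algebraMap (RatFunc Fq) L).injective.comp (RatFunc.algebraMap_injective Fq)
  have hinj : Function.Injective (algebraMap (Polynomial Fq) S) := by
    intro a b hab
    apply hinjL
    rw [IsScalarTower.algebraMap_apply (Polynomial Fq) S L, hab,
      ← IsScalarTower.algebraMap_apply (Polynomial Fq) S L]
  have hker : RingHom.ker (algebraMap (Polynomial Fq) S) ≤ Ideal.span {P} := by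
    rw [(RingHom.injective_iff_ker_eq_bot _).1 hinj]
    exact bot_le
  obtain ⟨Q, hQ, hQP⟩ := Ideal.exists_ideal_over_prime_of_isIntegral_of_isDomain
    (S := S) (Ideal.span {P}) hker
  have hQmax : Q.IsPrime := hQ
  have hlies : Q.LiesOver (Ideal.span {P}) := ⟨hQP.symm⟩
  obtain ⟨hf1, hf2⟩ := ck_card_quot P hPm
  have : Finite (S ⧸ Q) := Module.finite_of_finite (Polynomial Fq ⧸ Ideal.span {P})
  obtain ⟨σ, hσ⟩ := IsArithFrobAt.exists_of_isInvariant (Polynomial Fq) (S ≃ₐ[Polynomial Fq] S) Q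
  have hcard : Nat.card (Polynomial Fq ⧸ Q.under (Polynomial Fq)) = Fintype.card Fq ^ P.natDegree := by
    rw [← hf2, Ideal.under_def, hQP]
  have hσ' : ∀ s : S, σ s - s ^ (Fintype.card Fq ^ P.natDegree) ∈ Q := by
    intro s
    have := hσ s
    rwa [hcard] at this
  have hMQ : algebraMap (Polynomial Fq) S M ∉ Q := by
    intro h
    have : M ∈ Ideal.span {P} := by rw [← hQP]; exact h
    exact hPM (Ideal.mem_span_singleton.1 this)
  have hPQ : algebraMap (Polynomial Fq) S P ∈ Q := by
    have : P ∈ Ideal.span {P} := Ideal.mem_span_singleton_self P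
    rw [← hQP] at this; exact this
  let ι : S →ₐ[Polynomial Fq] AlgebraicClosure (RatFunc Fq) :=
    (IsScalarTower.toAlgHom (Polynomial Fq) L (AlgebraicClosure (RatFunc Fq))).comp S.val
  have hι : Function.Injective ι :=
    (algebraMap L (AlgebraicClosure (RatFunc Fq))).injective.comp Subtype.val_injective
  have hker0 : ∀ y : S, y ∈ Q → ψ M (ι y) = 0 → y = 0 := by
    intro y hy h
    by_contra hy0
    have h2 : ι (∑ i ∈ Finset.range (M.natDegree + 1),
        algebraMap (Polynomial Fq) S (c i) * y ^ (Fintype.card Fq ^ i)) = 0 := by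
      rw [← h, cev]
      simp
    rw [map_eq_zero_iff _ hι, Finset.sum_range_succ', c0, pow_zero, pow_one] at h2
    have h3 : y * (algebraMap (Polynomial Fq) S M + ∑ i ∈ Finset.range M.natDegree,
        algebraMap (Polynomial Fq) S (c (i+1)) * y ^ (Fintype.card Fq ^ (i+1) - 1)) = 0 := by
      rw [← h2, mul_add, Finset.mul_sum, add_comm, mul_comm y]
      congr 1
      refine Finset.sum_congr rfl fun i _ => ?_
      rw [mul_left_comm, ← pow_succ', Nat.sub_add_cancel (Nat.one_le_pow _ _ Fintype.card_pos)]
    have h4 := (mul_eq_zero.1 h3).resolve_left hy0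
    apply hMQ
    rw [eq_neg_of_add_eq_zero_left h4]
    refine neg_mem (sum_mem fun i _ => Ideal.mul_mem_left _ _ (Ideal.pow_mem_of_mem _ hy _ ?_))
    have : 1 < Fintype.card Fq ^ (i+1) := Nat.one_lt_pow (by omega) Fintype.one_lt_card
    omega
  obtain ⟨b, b0, bn, -, brec, bev⟩ := ck_coeffs ψ hψ P.natDegree P le_rfl
  have hbdvd := ck_prime_dvd P hP b b0 brec
  let σL : L ≃ₐ[RatFunc Fq] L := (galRestrict (Polynomial Fq) (RatFunc Fq) L S).symm σ
  refine ⟨σL.liftNormal _, fun x hx => ?_⟩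
  have hxL : x ∈ L := subset_adjoin _ _ hx
  have hxint : IsIntegral (Polynomial Fq) x := ck_integral ψ hψ M hM x hx
  have hxint' : IsIntegral (Polynomial Fq) (⟨x, hxL⟩ : L) :=
    (isIntegral_algHom_iff (IsScalarTower.toAlgHom (Polynomial Fq) L (AlgebraicClosure (RatFunc Fq)))
      (algebraMap L (AlgebraicClosure (RatFunc Fq))).injective).1 hxint
  let s : S := ⟨⟨x, hxL⟩, hxint'⟩
  have hs : ι s = x := rfl
  have hστ : σL.liftNormal (AlgebraicClosure (RatFunc Fq)) x = ι (σ s) := by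
    have h1 : σL.liftNormal (AlgebraicClosure (RatFunc Fq))
        (algebraMap L (AlgebraicClosure (RatFunc Fq)) ⟨x, hxL⟩)
        = algebraMap L (AlgebraicClosure (RatFunc Fq)) (σL ⟨x, hxL⟩) :=
      AlgEquiv.liftNormal_commutes _ _ _
    have h2 : σL (algebraMap S L s) = algebraMap S L (σ s) :=
      galRestrict_symm_algebraMap_apply (Polynomial Fq) (RatFunc Fq) σ s
    exact h1.trans (congrArg (algebraMap L (AlgebraicClosure (RatFunc Fq))) h2)
  let t : S := ∑ i ∈ Finset.range (P.natDegree + 1),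
        algebraMap (Polynomial Fq) S (b i) * s ^ (Fintype.card Fq ^ i)
  have ht : ι t = ψ P x := by
    rw [bev, ← hs]
    simp [t]
  have htQ : t - s ^ (Fintype.card Fq ^ P.natDegree) ∈ Q := by
    simp only [t]
    rw [Finset.sum_range_succ, bn, hPm.coeff_natDegree, map_one, map_one, one_mul,
      add_sub_cancel_right]
    refine sum_mem fun i hi => Ideal.mul_mem_right _ _ ?_
    obtain ⟨w, hw⟩ := hbdvd i (Finset.mem_range.1 hi)
    rw [hw, map_mul]
    exact Ideal.mul_mem_right _ _ hPQ
  have hyQ : σ s - t ∈ Q := by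
    have := sub_mem (hσ' s) htQ
    rwa [sub_sub_sub_cancel_right] at this
  have hfinal := hker0 _ hyQ (by
    rw [map_sub, map_sub, ← hστ, ht, ← ck_mul, mul_comm, ck_mul, hx, map_zero, sub_zero]
    have := ck_map' ψ hψ M x (σL.liftNormal (AlgebraicClosure (RatFunc Fq))).toAlgHom
    rw [hx, map_zero] at this
    exact this.symm)
  rw [hστ, ← ht, sub_eq_zero.1 hfinal]

theorem ck_frob_mul {Fq : Type} [Field Fq] [Fintype Fq] [DecidableEq Fq]
    (ψ : Polynomial Fq →+* AddMonoid.End (AlgebraicClosure (RatFunc Fq)))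
    (hψ : IsCarlitz ψ) (M : Polynomial Fq) (hM : 0 < M.natDegree)
    (f : Polynomial Fq) : IsCoprime f M →
    ∃ τ : AlgebraicClosure (RatFunc Fq) ≃ₐ[RatFunc Fq] AlgebraicClosure (RatFunc Fq),
      ∀ x, ψ M x = 0 → τ x = ψ (normalize f) x := by
  induction f using UniqueFactorizationMonoid.induction_on_prime with
  | h₁ =>
    intro h
    rw [isCoprime_zero_left] at h
    have := natDegree_eq_zero_of_isUnit h
    omega
  | h₂ f hf =>
    intro _
    refine ⟨AlgEquiv.refl, fun x _ => ?_⟩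
    rw [normalize_eq_one.2 hf, ck_one]; rfl
  | h₃ a p ha hp ih =>
    intro h
    obtain ⟨τ, hτ⟩ := ih h.of_mul_left_right
    have hp' : Irreducible (normalize p) := (normalize_associated p).symm.irreducible hp.irreducible
    obtain ⟨ρ, hρ⟩ := ck_frob ψ hψ M hM (normalize p) hp' (monic_normalize hp.ne_zero) (by
      intro hd
      have h1 : p ∣ M := (dvd_normalize_iff.2 dvd_rfl).trans hd
      exact hp.not_isUnit (h.of_mul_left_left.isUnit_of_dvd' dvd_rfl h1))
    have hnm : normalize (p * a) = normalize p * normalize a := by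
      refine Eq.trans ?_ ((monic_normalize hp.ne_zero).mul (monic_normalize ha)).normalize_eq_self
      exact normalize_eq_normalize_iff_associated.2
        ((normalize_associated p).symm.mul_mul (normalize_associated a).symm)
    refine ⟨ρ * τ, fun x hx => ?_⟩
    rw [AlgEquiv.mul_apply, hτ x hx, hnm, ck_mul]
    apply hρ
    rw [← ck_mul, mul_comm, ck_mul, hx, map_zero]

theorem ck_exists_sigma {Fq : Type} [Field Fq] [Fintype Fq]
    (ψ : Polynomial Fq →+* AddMonoid.End (AlgebraicClosure (RatFunc Fq)))
    (hψ : IsCarlitz ψ) (M : Polynomial Fq) (hM : 0 < M.natDegree)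
    (hq : ¬ (Fintype.card Fq = 2 ∧ (X ∣ M ∨ X + 1 ∣ M))) :
    ∃ (B : Polynomial Fq)
      (τ : AlgebraicClosure (RatFunc Fq) ≃ₐ[RatFunc Fq] AlgebraicClosure (RatFunc Fq)),
      IsCoprime (B - 1) M ∧ ∀ x, ψ M x = 0 → τ x = ψ B x := by
  classical
  by_cases h2 : Fintype.card Fq = 2
  · have hX : ¬ X ∣ M := fun h => hq ⟨h2, Or.inl h⟩
    have hX1 : ¬ X + 1 ∣ M := fun h => hq ⟨h2, Or.inr h⟩
    obtain ⟨τ, hτ⟩ := ck_frob ψ hψ M hM X irreducible_X monic_X hX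
    refine ⟨X, τ, ?_, hτ⟩
    have h3 : (1 : Fq) + 1 = 0 := by
      have := FiniteField.cast_card_eq_zero Fq
      rw [h2] at this
      norm_num at this ⊢
      exact this
    have h4 : (X - 1 : Polynomial Fq) = X + 1 := by
      have : (C (1 + 1) : Polynomial Fq) = 0 := by rw [h3, C_0]
      rw [C_add, C_1] at this
      linear_combination -this
    have h5 : Irreducible (X - 1 : Polynomial Fq) := by
      have := irreducible_X_sub_C (1 : Fq)
      rwa [C_1] at this
    rw [h5.coprime_iff_not_dvd, h4]
    exact hX1
  · have hc : ∃ c : Fq, c ≠ 0 ∧ c ≠ 1 := by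
      have h1 : 2 < Fintype.card Fq := lt_of_le_of_ne Fintype.one_lt_card (Ne.symm h2)
      obtain ⟨c, hc0, hc1⟩ := Fintype.two_lt_card_iff.1 h1 |> fun _ => 
        (show ∃ c : Fq, c ≠ 0 ∧ c ≠ 1 by
          by_contra hcon
          push Not at hcon
          have hs : (Finset.univ : Finset Fq) ⊆ {0, 1} := by
            intro x _
            by_cases hx : x = 0
            · simp [hx]
            · simp [hcon x hx]
          have := (Finset.card_le_card hs).trans Finset.card_le_two
          rw [Finset.card_univ] at this
          omega)
      exact ⟨c, hc0, hc1⟩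
    obtain ⟨c, hc0, hc1⟩ := hc
    have hM0 : M ≠ 0 := by rintro rfl; simp at hM
    have hmon : (normalize M + C c).Monic := by
      refine (monic_normalize hM0).add_of_left ?_
      refine degree_C_le.trans_lt ?_
      rw [degree_normalize]
      exact natDegree_pos_iff_degree_pos.1 hM
    have hcu : IsUnit (C c) := isUnit_C.2 (isUnit_iff_ne_zero.2 hc0)
    have hcu1 : IsUnit (C c - 1) := by
      rw [← C_1, ← C_sub]
      exact isUnit_C.2 (isUnit_iff_ne_zero.2 (sub_ne_zero.2 hc1))
    obtain ⟨u, hu⟩ : M ∣ normalize M := (dvd_normalize_iff.2 dvd_rfl)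
    have hcop : IsCoprime (normalize M + C c) M := by
      obtain ⟨v, hv⟩ := hcu.exists_left_inv
      refine ⟨v, - v * u, ?_⟩
      rw [hu]
      linear_combination hv
    obtain ⟨τ, hτ⟩ := ck_frob_mul ψ hψ M hM _ hcop
    refine ⟨C c, τ, ?_, fun x hx => ?_⟩
    · obtain ⟨v, hv⟩ := hcu1.exists_left_inv
      exact ⟨v, 0, by rw [hv]; ring⟩
    · rw [hτ x hx, hmon.normalize_eq_self, ck_add, hu, mul_comm, ck_mul, hx, map_zero, zero_add]

/-- **Theorem 2.9.**
Suppose `q ≠ 2`, or `q = 2` and `T ∤ M` and `(T+1) ∤ M`.  Let `Γ` be a finitely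
generated `A`-submodule of `(k,+)`, `Γ' = (1/M)Γ ∩ k`, let `e = e(Γ'/Γ)` be the monic
polynomial of smallest degree with `Γ'^e ⊆ Γ`, and let `e_M(Γ) = gcd(e(Γ'/Γ), M)`.
Let `Γ_φ` be the kernel of the map `φ : Γ → Hom_A(H_Γ(M), Λ_M)`, i.e.
`Γ_φ = {a ∈ Γ : ⟨σ, a⟩ = 0 for all σ ∈ H_Γ(M)}`.  Then `Γ_φ^{e_M(Γ)} ⊆ Γ^M`:
the image of `Γ_φ` under the Carlitz action of `e_M(Γ)` is contained in the image of
`Γ` under the Carlitz action of `M`. -/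
theorem carlitz_kummer_kernel_bound
    {Fq : Type} [Field Fq] [Fintype Fq]
    (ψ : Polynomial Fq →+* AddMonoid.End (AlgebraicClosure (RatFunc Fq)))
    (hψ : IsCarlitz ψ)
    (M : Polynomial Fq) (hM : 0 < M.natDegree)
    (hq : ¬ (Fintype.card Fq = 2 ∧ (X ∣ M ∨ X + 1 ∣ M)))
    -- Γ : a finitely generated A-submodule of (k, +)
    (Γ : AddSubgroup (AlgebraicClosure (RatFunc Fq)))
    (hΓk : ∀ x ∈ Γ, x ∈ Set.range (algebraMap (RatFunc Fq) (AlgebraicClosure (RatFunc Fq))))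
    (hΓA : ∀ (f : Polynomial Fq), ∀ x ∈ Γ, ψ f x ∈ Γ)
    (hΓfg : ∃ (n : ℕ) (a : Fin n → AlgebraicClosure (RatFunc Fq)), (∀ i, a i ∈ Γ) ∧
      ∀ x ∈ Γ, ∃ g : Fin n → Polynomial Fq, x = ∑ i, ψ (g i) (a i))
    -- k_{M,Γ} = k(Λ_M, (1/M)Γ)
    (E : IntermediateField (RatFunc Fq) (AlgebraicClosure (RatFunc Fq)))
    (hE : E = adjoin (RatFunc Fq) {x | ψ M x ∈ Γ})
    -- e = e(Γ'/Γ) : the exponent of Γ' = (1/M)Γ ∩ k over Γ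
    (e : Polynomial Fq) (he : e.Monic)
    (heΓ : ∀ x : AlgebraicClosure (RatFunc Fq),
      x ∈ Set.range (algebraMap (RatFunc Fq) (AlgebraicClosure (RatFunc Fq))) →
      ψ M x ∈ Γ → ψ e x ∈ Γ)
    (hemin : ∀ e' : Polynomial Fq, e'.Monic →
      (∀ x : AlgebraicClosure (RatFunc Fq),
        x ∈ Set.range (algebraMap (RatFunc Fq) (AlgebraicClosure (RatFunc Fq))) →
        ψ M x ∈ Γ → ψ e' x ∈ Γ) →
      e.degree ≤ e'.degree)
    -- d = e_M(Γ) = gcd(e(Γ'/Γ), M)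
    (d : Polynomial Fq) (hd1 : d ∣ e) (hd2 : d ∣ M)
    (hd3 : ∀ d' : Polynomial Fq, d' ∣ e → d' ∣ M → d' ∣ d) :
    -- Γ_φ^{e_M(Γ)} ⊆ Γ^M
    ∀ a ∈ Γ,
      (∀ σ : ↥E ≃ₐ[RatFunc Fq] ↥E, FixesTorsion ψ M σ →
        ∀ α : ↥E, ψ M (α : AlgebraicClosure (RatFunc Fq)) = a → σ α = α) →
      ∃ γ ∈ Γ, ψ M γ = ψ d a := by

  classical
  intro a ha hfix
  have hgal : IsGalois (RatFunc Fq) E := by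
    rw [hE]; exact ck_galois ψ hψ M hM Γ hΓk
  obtain ⟨B, τ0, hB, hτ0⟩ := ck_exists_sigma ψ hψ M hM hq
  -- the restriction to `E`
  let τ : E ≃ₐ[RatFunc Fq] E := τ0.restrictNormal E
  have hτ : ∀ x : E, ψ M (x : AlgebraicClosure (RatFunc Fq)) = 0 →
      ((τ x : E) : AlgebraicClosure (RatFunc Fq)) = ψ B x := by
    intro x hx
    rw [← hτ0 _ hx]
    exact AlgEquiv.restrictNormal_commutes τ0 E x
  -- elements of `(1/M)Γ` lie in `E`
  have hmem : ∀ x, ψ M x ∈ Γ → x ∈ E := by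
    intro x hx; rw [hE]; exact subset_adjoin _ _ hx
  have hmem0 : ∀ x, ψ M x = 0 → x ∈ E := fun x hx => hmem x (by rw [hx]; exact Γ.zero_mem)
  have hcomm : ∀ (σ : E ≃ₐ[RatFunc Fq] E) (f : Polynomial Fq) (x y : E),
      (y : AlgebraicClosure (RatFunc Fq)) = ψ f x →
      ((σ y : E) : AlgebraicClosure (RatFunc Fq)) = ψ f (σ x : E) := by
    intro σ f x y hy
    obtain ⟨z, hz, h⟩ := ck_map ψ hψ f E x
    have hzy : z = y := Subtype.ext (hz.trans hy.symm)
    subst hzy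
    exact h (E.val.comp σ.toAlgHom)
  have htors : ∀ (σ : E ≃ₐ[RatFunc Fq] E) (x : E), ψ M (x : AlgebraicClosure (RatFunc Fq)) = 0 →
      ψ M ((σ x : E) : AlgebraicClosure (RatFunc Fq)) = 0 := by
    intro σ x hx
    rw [← hcomm σ M x 0 (by rw [hx]; rfl), map_zero]; rfl
  have hbase : ∀ (σ : E ≃ₐ[RatFunc Fq] E) (x : E), ψ M (x : AlgebraicClosure (RatFunc Fq)) = a →
      ψ M ((σ x : E) : AlgebraicClosure (RatFunc Fq)) = a := by
    intro σ x hx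
    obtain ⟨a', ha'⟩ := hΓk a ha
    rw [← hcomm σ M x (algebraMap (RatFunc Fq) E a') (by rw [hx, ← ha']; rfl), AlgEquiv.commutes,
      ← ha']
    rfl
  obtain ⟨u, v, huv⟩ := hB
  have hBinj : ∀ x, ψ M x = 0 → ψ (u * (B - 1)) x = x := by
    intro x hx
    have := congrArg (fun f => ψ f x) huv
    simp only [ck_add, ck_one] at this
    rwa [ck_mul ψ v M, hx, map_zero, add_zero] at this
  -- a root
  obtain ⟨α0, hα0⟩ : ∃ x, ψ M x = a := by
    obtain ⟨a', ha'⟩ := hΓk a ha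
    obtain ⟨p, hp, h⟩ := ck_poly ψ hψ M hM a'
    have hdeg : p.degree ≠ 0 := by
      intro h0
      obtain ⟨w, hw⟩ : ∃ w, p = C w := ⟨_, eq_C_of_degree_eq_zero h0⟩
      have e1 : ∀ x, ψ M x = algebraMap _ _ w + algebraMap _ _ a' := by
        intro x
        have := h x
        rw [hw, aeval_C] at this
        rw [this]; ring
      have e2 : ∀ x, ψ M x = 0 := by
        intro x
        rw [e1 x, ← e1 0, map_zero]
      obtain ⟨p', hp', h'⟩ := ck_poly ψ hψ M hM 0
      have : (p'.rootSet (AlgebraicClosure (RatFunc Fq))) = Set.univ := by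
        ext x
        simp only [Set.mem_univ, iff_true]
        rw [mem_rootSet]
        refine ⟨hp'.ne_zero, ?_⟩
        rw [h', e2 x]; simp
      have hf := p'.rootSet_finite (AlgebraicClosure (RatFunc Fq))
      rw [this] at hf
      exact Set.infinite_univ hf
    obtain ⟨x, hx⟩ := IsAlgClosed.exists_aeval_eq_zero (AlgebraicClosure (RatFunc Fq)) p hdeg
    rw [h, ha'] at hx
    exact ⟨x, sub_eq_zero.1 hx⟩
  let α : E := ⟨α0, hmem _ (by rw [hα0]; exact ha)⟩
  have hα : ψ M (α : AlgebraicClosure (RatFunc Fq)) = a := hα0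
  -- the correction
  have hμ : ψ M ((τ α - α : E) : AlgebraicClosure (RatFunc Fq)) = 0 := by
    push_cast
    rw [map_sub, hbase τ α hα, hα, sub_self]
  have hlam : ψ M (ψ u ((τ α - α : E) : AlgebraicClosure (RatFunc Fq))) = 0 := by
    rw [← ck_mul, mul_comm, ck_mul, hμ, map_zero]
  let lam : E := ⟨_, hmem0 _ hlam⟩
  have hlam' : ψ M (lam : AlgebraicClosure (RatFunc Fq)) = 0 := hlam
  have hlamB : τ lam - lam = τ α - α := by
    apply Subtype.ext
    rw [← hBinj _ hμ, mul_comm, ck_mul, ck_sub, ck_one]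
    change ((τ lam : E) : AlgebraicClosure (RatFunc Fq)) - _ = _
    rw [hτ lam hlam']
  let β : E := α - lam
  have hβ : ψ M (β : AlgebraicClosure (RatFunc Fq)) = a := by
    change ψ M ((α : AlgebraicClosure (RatFunc Fq)) - lam) = a
    rw [map_sub, hα, hlam', sub_zero]
  have hτβ : τ β = β := by
    simp only [β, map_sub]
    linear_combination -hlamB
  have hβfix : ∀ g : E ≃ₐ[RatFunc Fq] E, g β = β := by
    intro g
    have hft : FixesTorsion ψ M (g⁻¹ * τ⁻¹ * g * τ) := by
      intro x hx
      have h1 : g (τ x) = τ (g x) := by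
        apply Subtype.ext
        rw [hτ _ (htors g x hx)]
        exact hcomm g B x (τ x) (hτ x hx)
      simp only [AlgEquiv.mul_apply]
      rw [h1, ← AlgEquiv.mul_apply τ⁻¹ τ, inv_mul_cancel, AlgEquiv.one_apply,
        ← AlgEquiv.mul_apply g⁻¹ g, inv_mul_cancel, AlgEquiv.one_apply]
    have h2 := hfix _ hft β hβ
    have h3 : g (τ β) = τ (g β) := by
      have h4 := congrArg (fun z => τ (g z)) h2
      simp only [← AlgEquiv.mul_apply] at h4 ⊢
      rw [← h4]
      congr 1
      group
    rw [hτβ] at h3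
    have hν : ψ M ((g β - β : E) : AlgebraicClosure (RatFunc Fq)) = 0 := by
      push_cast
      rw [map_sub, hbase g β hβ, hβ, sub_self]
    have h5 : τ (g β - β) = g β - β := by rw [map_sub, ← h3, hτβ]
    have h6 := hτ _ hν
    rw [h5] at h6
    have h7 := hBinj _ hν
    rw [ck_mul, ck_sub, ck_one, ← h6, sub_self, map_zero] at h7
    exact sub_eq_zero.1 (Subtype.ext h7.symm)
  obtain ⟨k0, hk0⟩ := (InfiniteGalois.mem_bot_iff_fixed β).2 hβfix
  have hβk : (β : AlgebraicClosure (RatFunc Fq)) ∈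
      Set.range (algebraMap (RatFunc Fq) (AlgebraicClosure (RatFunc Fq))) :=
    ⟨k0, by rw [← hk0]; rfl⟩
  have hβΓ : ψ M (β : AlgebraicClosure (RatFunc Fq)) ∈ Γ := by rw [hβ]; exact ha
  have hβe := heΓ _ hβk hβΓ
  -- Bezout
  obtain ⟨r, s, hrs⟩ : ∃ r s, d = r * e + s * M := by
    have hg := EuclideanDomain.gcd_eq_gcd_ab e M
    obtain ⟨w, hw⟩ : EuclideanDomain.gcd e M ∣ d :=
      hd3 _ (EuclideanDomain.gcd_dvd_left e M) (EuclideanDomain.gcd_dvd_right e M)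
    exact ⟨EuclideanDomain.gcdA e M * w, EuclideanDomain.gcdB e M * w, by rw [hw, hg]; ring⟩
  refine ⟨ψ d β, ?_, ?_⟩
  · rw [hrs, ck_add, ck_mul, ck_mul]
    exact Γ.add_mem (hΓA _ _ hβe) (hΓA _ _ hβΓ)
  · rw [← ck_mul, mul_comm, ck_mul, hβ]
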